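/- arXiv:1209.3054 — 3 statements merged into one kernel-verified Lean document; each statement's English description precedes it below -/
import Mathlib

section
/- The category Cls, whose objects are classifications and whose morphisms E2 → E1 are infomorphisms ⟨f, g⟩ : E2 ⇄ E1 with componentwise composition, is complete: it has all small limits. -/
open CategoryTheory CategoryTheory.Limits

/-- A classification `E = (X, Y, ⊨_E)`. -/
structure Classification : Type 1 where
  X : Type
  Y : Type
  models : Y → X → Prop

/-- An infomorphism `⟨f, g⟩ : E2 ⇄ E1`: a type function `f : X2 → X1` and an instance
function `g : Y1 → Y2` such that `g y ⊨2 x ↔ y ⊨1 f x`. -/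
structure Infomorphism (E2 E1 : Classification) where
  f : E2.X → E1.X
  g : E1.Y → E2.Y
  adj : ∀ y x, E2.models (g y) x ↔ E1.models y (f x)

/-- The category `Cls` of classifications and infomorphisms, with componentwise
composition. -/
instance : Category Classification where
  Hom E2 E1 := Infomorphism E2 E1
  id E := ⟨fun x => x, fun y => y, fun _ _ => Iff.rfl⟩
  comp {A B C} m m' :=
    ⟨fun x => m'.f (m.f x), fun y => m.g (m'.g y),
      fun y x => (m.adj _ _).trans (m'.adj _ _)⟩

/-!
A classification is the same thing as a map `X → 𝒫(Y)` sending a type to its extent, and the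
biconditional defining an infomorphism says that a square of such maps commutes. So `Cls` is the
comma category of the identity functor on `Type` over the contravariant powerset functor
`𝒫 : Typeᵒᵖ ⥤ Type`. Limits in such a comma category are computed componentwise as soon as `𝒫`
preserves limits, which it does because it is represented by `Prop`; on instances, limits in
`Typeᵒᵖ` are colimits of types.
-/

universe v u

namespace Classification

/-- The contravariant powerset functor, encoded as the functor represented by `Prop`. -/
abbrev powerset : Typeᵒᵖ ⥤ Type := yoneda.obj Prop

/-- Sends a classification to its extent map, as an object of the comma category of the identity
functor over the powerset functor. The instance component lives in `Typeᵒᵖ` because infomorphisms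
are contravariant on instances. -/
def toComma : Classification ⥤ Comma (𝟭 Type) powerset where
  obj E :=
    { left := E.X
      right := Opposite.op E.Y
      hom := ↾fun x ↦ ↾fun y ↦ E.models y x }
  map {_ E₁} m :=
    { left := ↾Infomorphism.f m
      right := Quiver.Hom.op (↾Infomorphism.g m)
      w := by
        ext x
        exact ConcreteCategory.hom_ext (X := E₁.Y) (Y := Prop) _ _ fun y ↦
          propext (Infomorphism.adj m y x).symm }

/-- The classification whose extent map is a given object of the comma category. -/
def ofComma : Comma (𝟭 Type) powerset ⥤ Classification where
  obj A :=
    { X := A.left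
      Y := A.right.unop
      models := fun y x ↦
        let extent : A.right.unop ⟶ Prop := A.hom x
        extent y }
  map {A B} φ :=
    { f := φ.left
      g := φ.right.unop
      adj := fun y x ↦ by
        have extents_eq : B.hom (φ.left x) = φ.right.unop ≫ A.hom x :=
          ConcreteCategory.congr_hom φ.w x
        exact (iff_of_eq (ConcreteCategory.congr_hom extents_eq y)).symm }

/-- `Cls` as a comma category; both round trips are definitionally the identity. -/
def equivComma : Classification ≌ Comma (𝟭 Type) powerset where
  functor := toComma
  inverse := ofComma
  unitIso := Iso.refl (𝟭 Classification)
  counitIso := Iso.refl (𝟭 (Comma (𝟭 Type) powerset))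

end Classification

theorem cls_hasLimits_general (J : Type u) [Category.{v} J] [Small.{0} J] :
    HasLimitsOfShape J Classification := by
  have : HasLimitsOfShape J Typeᵒᵖ := hasLimitsOfShape_op_of_hasColimitsOfShape
  have : PreservesLimitsOfShape J Classification.powerset := yoneda_preservesLimitsOfShape J Prop
  have : HasLimitsOfShape J (Comma (𝟭 Type) Classification.powerset) := Comma.hasLimitsOfShape
  exact Adjunction.hasLimitsOfShape_of_equivalence Classification.equivComma.functor

/-- the category `Cls` of classifications and infomorphisms is complete:
it has all small limits. -/
theorem cls_hasLimits : HasLimits Classification :=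
  ⟨fun J _ ↦ cls_hasLimits_general J⟩
end

section
/- The category Tbl of tables is complete: it has all small limits. -/
open CategoryTheory CategoryTheory.Limits

/-- A table `T = (E, (I, s), K, t)`: a classification `E`, a signature `s : I → X`, a set
`K` of keys, and a tuple function `t : K → tup_E(I, s)`. -/
structure Table : Type 1 where
  E : Classification
  I : Type
  s : I → E.X
  K : Type
  t : K → { u : I → E.Y // ∀ i, E.models (u i) (s i) }

/-- A table morphism `⟨h, f, g, k⟩ : T1 → T2`: an infomorphism `⟨f, g⟩ : E2 ⇄ E1`, a
function `h : I2 → I1` with `f ∘ s2 = s1 ∘ h`, and a key function `k : K1 → K2` such that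
`t2 (k a) = g ∘ t1 a ∘ h` for all `a ∈ K1`. -/
structure TableHom (T1 T2 : Table) where
  fg : Infomorphism T2.E T1.E
  h : T2.I → T1.I
  comm : ∀ i, fg.f (T2.s i) = T1.s (h i)
  k : T1.K → T2.K
  cond : ∀ a i, (T2.t (k a)).1 i = fg.g ((T1.t a).1 (h i))

/-- The category `Tbl` of tables and table morphisms, with componentwise composition. -/
instance : Category Table where
  Hom := TableHom
  id T := ⟨⟨fun x => x, fun y => y, fun _ _ => Iff.rfl⟩, fun i => i, fun _ => rfl,
    fun a => a, fun _ _ => rfl⟩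
  comp {A B C} m m' :=
    ⟨⟨fun x => m.fg.f (m'.fg.f x), fun y => m'.fg.g (m.fg.g y),
        fun y x => (m'.fg.adj _ _).trans (m.fg.adj _ _)⟩,
      fun i => m.h (m'.h i),
      fun i => by
        show m.fg.f (m'.fg.f (C.s i)) = A.s (m.h (m'.h i))
        rw [m'.comm i, m.comm (m'.h i)],
      fun a => m'.k (m.k a),
      fun a i => by
        show (C.t (m'.k (m.k a))).1 i = m'.fg.g (m.fg.g ((A.t a).1 (m.h (m'.h i))))
        rw [m'.cond (m.k a) i, m.cond a (m'.h i)]⟩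

/-!
A table is a map from its keys into the tuples over its signed domain `(E, (I, s))`, a signed domain
is a map `s : I → X` into the types of a classification, and a classification is a map from its
instances into the predicates on its types. So `Tbl` is obtained by iterating comma categories,
starting from sets and their opposites. A comma category `(𝟭 ↓ R)` inherits limits even when `R`
does not preserve them: the limit of `Aⱼ ⟶ R Bⱼ` is the pullback of `lim Aⱼ ⟶ lim R Bⱼ` along the
comparison map `R (lim Bⱼ) ⟶ lim R Bⱼ`. This generality is needed for tables: a tuple over a limit
of signed domains is in general not determined by the tuples it induces over these domains, so a key
of the limit table is a compatible family of keys together with a tuple inducing theirs.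
-/

open Opposite

section CommaLimits

open CategoryTheory.Comma

variable {J C B : Type*} [Category* J] [Category* C] [Category* B] {R : B ⥤ C}
  {F : J ⥤ Comma (𝟭 C) R} {c₁ : Cone (F ⋙ fst (𝟭 C) R)} {c₂ : Cone (F ⋙ snd (𝟭 C) R)}
  {c₃ : Cone ((F ⋙ snd (𝟭 C) R) ⋙ R)} {a : c₁.pt ⟶ c₃.pt} {b : R.obj c₂.pt ⟶ c₃.pt}
  (ha : ∀ j, a ≫ c₃.π.app j = c₁.π.app j ≫ (F.obj j).hom)
  (hb : ∀ j, b ≫ c₃.π.app j = R.map (c₂.π.app j))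
  {P : C} {p : P ⟶ c₁.pt} {q : P ⟶ R.obj c₂.pt}

/-- The cone with apex `q : P ⟶ R c₂.pt` over a diagram `j ↦ (Aⱼ ⟶ R Bⱼ)`, built from cones `c₁`,
`c₂` and `c₃` over `Aⱼ`, `Bⱼ` and `R Bⱼ` and a commutative square on `P`, `c₁.pt`, `R c₂.pt` and
`c₃.pt`. -/
def commaConeOfCommSq (sq : CommSq p q a b) : Cone F where
  pt := { left := P, right := c₂.pt, hom := q }
  π :=
    { app j :=
        { left := p ≫ c₁.π.app j
          right := c₂.π.app j
          w := by simp [← ha, ← hb, sq.w_assoc] }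
      naturality j j' m := by
        ext
        · simp [← c₁.w m]
        · simp [← c₂.w m] }

/-- The universal property of `commaConeOfCommSq` for limit cones and a pullback square. -/
noncomputable def isLimitCommaConeOfIsPullback (t₁ : IsLimit c₁) (t₂ : IsLimit c₂)
    (t₃ : IsLimit c₃) (sq : IsPullback p q a b) :
    IsLimit (commaConeOfCommSq ha hb sq.toCommSq) where
  lift c :=
    { left := sq.lift (t₁.lift ((fst _ R).mapCone c))
        (c.pt.hom ≫ R.map (t₂.lift ((snd _ R).mapCone c)))
        (t₃.hom_ext fun j => by
          simpa [ha, hb, ← Functor.map_comp, t₁.fac_assoc] using (c.π.app j).w)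
      right := t₂.lift ((snd _ R).mapCone c)
      w := sq.lift_snd _ _ _ }
  fac c j := by
    ext
    · exact (sq.lift_fst_assoc _ _ _ _).trans (t₁.fac _ j)
    · exact t₂.fac _ j
  uniq c m hm := by
    have hleft : m.left ≫ p = t₁.lift ((fst _ R).mapCone c) :=
      t₁.uniq ((fst _ R).mapCone c) _ fun j =>
        (Category.assoc _ _ _).trans congr($(hm j).left)
    have hright : m.right = t₂.lift ((snd _ R).mapCone c) :=
      t₂.uniq ((snd _ R).mapCone c) _ fun j => congr($(hm j).right)
    ext
    · refine sq.hom_ext (hleft.trans (sq.lift_fst _ _ _).symm) (m.w.trans ?_)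
      rw [hright]
      exact (sq.lift_snd _ _ _).symm
    · exact hright

end CommaLimits

theorem hasLimitsOfShape_comma_id {J C B : Type*} [Category* J] [Category* C] [Category* B]
    (R : B ⥤ C) [HasLimitsOfShape J C] [HasLimitsOfShape J B] [HasPullbacks C] :
    HasLimitsOfShape J (Comma (𝟭 C) R) where
  has_limit F :=
    let t₃ := limit.isLimit ((F ⋙ Comma.snd _ R) ⋙ R)
    let structureCone := (Cone.postcompose (Functor.whiskerLeft F (Comma.natTrans _ R))).obj
      (limit.cone (F ⋙ Comma.fst _ R))
    let imageCone := R.mapCone (limit.cone (F ⋙ Comma.snd _ R))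
    ⟨⟨_, isLimitCommaConeOfIsPullback (t₃.fac structureCone) (t₃.fac imageCone)
      (limit.isLimit _) (limit.isLimit _) t₃ (IsPullback.of_hasPullback _ _)⟩⟩

/-- The contravariant functor of predicates on a type, with preimages as its action on maps. -/
def predicateFunctor : Typeᵒᵖ ⥤ Type where
  obj X := X.unop → Prop
  map f := ↾fun p x => p (f.unop x)

/-- The opposite of the category of classifications and infomorphisms, a classification being
encoded as the map sending an instance (`left`) to the predicate it satisfies on types (`right`).
A morphism `E1 ⟶ E2` is an infomorphism `E2 ⇄ E1`, as in a morphism of tables. -/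
abbrev ClassificationOp : Type 1 := Comma (𝟭 Type) predicateFunctor

namespace ClassificationOp

/-- The classification relation `⊨`. -/
def models (E : ClassificationOp) : E.left → E.right.unop → Prop := E.hom

lemma models_left {E E' : ClassificationOp} (φ : E ⟶ E') (y : E.left) (x : E'.right.unop) :
    E'.models (φ.left y) x ↔ E.models y (φ.right.unop x) :=
  iff_of_eq (congrFun congr($(φ.w) y) x)

instance : HasLimits ClassificationOp where
  has_limits_of_shape _ := hasLimitsOfShape_comma_id _

end ClassificationOp

/-- The category of signed domains `(E, (I, s))`, the index type `I` (`right`) and the signature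
`s : I → X` (`hom`) living in `Typeᵒᵖ` so that morphisms have the direction of table morphisms. -/
abbrev SignedDomain : Type 1 := Comma (Comma.snd (𝟭 Type) predicateFunctor) (𝟭 Typeᵒᵖ)

namespace SignedDomain

/-- The signature `s : I → X`. -/
def signature (S : SignedDomain) : S.right.unop → S.left.right.unop := S.hom.unop

lemma signature_right {S S' : SignedDomain} (φ : S ⟶ S') (i : S'.right.unop) :
    S.signature (φ.right.unop i) = φ.left.right.unop (S'.signature i) :=
  congr(($(φ.w)).unop i).symm

/-- The functor sending a signed domain `(E, (I, s))` to its tuple set `tup_E(I, s)`. -/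
def tup : SignedDomain ⥤ Type where
  obj S :=
    { u : S.right.unop → S.left.left //
      ∀ i, ClassificationOp.models S.left (u i) (S.signature i) }
  map φ := ↾fun u => ⟨fun i => φ.left.left (u.1 (φ.right.unop i)), fun i => by
    rw [ClassificationOp.models_left, ← signature_right]
    exact u.2 _⟩

instance : HasLimits (Comma (𝟭 Type) tup) where
  has_limits_of_shape _ := hasLimitsOfShape_comma_id _

end SignedDomain

attribute [ext] Infomorphism TableHom

namespace Table

/-- The signed domain `(E, (I, s))` underlying a table. -/
def signedDomain (T : Table) : SignedDomain where
  left :=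
    { left := T.E.Y
      right := op T.E.X
      hom := TypeCat.ofHom (Y := T.E.X → Prop) T.E.models }
  right := op T.I
  hom := (↾T.s).op

/-- The tuple function of a table, with values in the tuple set of its signed domain. -/
def tuple (T : Table) : T.K → SignedDomain.tup.obj T.signedDomain := T.t

/-- The comparison functor from `Tbl` to the comma category of `tup`, an equivalence. -/
def toComma : Table ⥤ Comma (𝟭 Type) SignedDomain.tup where
  obj T := { left := T.K, right := T.signedDomain, hom := ↾T.tuple }
  map (φ : TableHom _ _) :=
    { left := ↾φ.k
      right :=
        { left :=
            { left := ↾φ.fg.g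
              right := (↾φ.fg.f).op
              w := by
                ext y
                exact funext fun x => propext (φ.fg.adj y x) }
          right := (↾φ.h).op
          w := Quiver.Hom.unop_inj (by
            ext i
            exact φ.comm i) }
      w := by
        ext a
        exact Subtype.ext (funext (φ.cond a)) }

instance : toComma.Faithful where
  map_injective {_ _} (φ ψ : TableHom _ _) h :=
    have hf : φ.fg.f = ψ.fg.f := funext fun x => congr($(h).right.left.right.unop x)
    have hg : φ.fg.g = ψ.fg.g := funext fun y => congr($(h).right.left.left y)
    have hh : φ.h = ψ.h := funext fun i => congr($(h).right.right.unop i)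
    have hk : φ.k = ψ.k := funext fun a => congr($(h).left a)
    TableHom.ext (Infomorphism.ext hf hg) hh hk

instance : toComma.Full where
  map_surjective φ :=
    ⟨{ fg :=
        { f := φ.right.left.right.unop
          g := φ.right.left.left
          adj y x := ClassificationOp.models_left φ.right.left y x }
       h := φ.right.right.unop
       comm i := (SignedDomain.signature_right φ.right i).symm
       k := φ.left
       cond a i := congr(($(φ.w) a).1 i) }, rfl⟩

instance : toComma.EssSurj where
  mem_essImage S :=
    ⟨{ E := ⟨S.right.left.right.unop, S.right.left.left, ClassificationOp.models S.right.left⟩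
       I := S.right.right.unop
       s := S.right.signature
       K := S.left
       t := S.hom }, ⟨Iso.refl S⟩⟩

instance : toComma.IsEquivalence where

end Table

/-- the category `Tbl` of tables is complete: it has all small limits. -/
theorem tbl_hasLimits : HasLimits Table :=
  Adjunction.has_limits_of_equivalence Table.toComma
end

section
/- The category Tbl of tables is cocomplete: it has all small colimits. -/
open CategoryTheory CategoryTheory.Limits

/-! A table morphism is covariant in entity instances and keys and contravariant in entity types
and indices. Accordingly a colimit of tables is computed componentwise: types and indices are limits
of sets, instances and keys are colimits of sets. Satisfaction and tuples are compatible with the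
gluing of instances and keys by the two conditions on a table morphism, so they descend to these
sets by their universal properties. -/

universe w v

namespace Table

open Opposite

/-- The functor `E.X` of entity types; contravariant, since infomorphisms map types backwards. -/
abbrev types : Tableᵒᵖ ⥤ Type where
  obj T := T.unop.E.X
  map m := ↾(TableHom.fg m.unop).f

/-- The functor `E.Y` of entity instances. -/
abbrev instances : Table ⥤ Type where
  obj T := T.E.Y
  map m := ↾(TableHom.fg m).g

/-- The functor `I` of signature indices; contravariant, like `types`. -/
abbrev indices : Tableᵒᵖ ⥤ Type where
  obj T := T.unop.I
  map m := ↾(TableHom.h m.unop)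

/-- The functor `K` of keys. -/
abbrev keys : Table ⥤ Type where
  obj T := T.K
  map m := ↾(TableHom.k m)

section Hom

variable {A B : Table}

theorem hom_ext {m n : A ⟶ B} (types_eq : types.map m.op = types.map n.op)
    (instances_eq : instances.map m = instances.map n)
    (indices_eq : indices.map m.op = indices.map n.op) (keys_eq : keys.map m = keys.map n) :
    m = n := by
  obtain ⟨⟨f, g, _⟩, h, _, k, _⟩ := m
  obtain ⟨⟨f', g', _⟩, h', _, k', _⟩ := n
  obtain rfl : f = f' := TypeCat.homEquiv.symm.injective types_eq
  obtain rfl : g = g' := TypeCat.homEquiv.symm.injective instances_eq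
  obtain rfl : h = h' := TypeCat.homEquiv.symm.injective indices_eq
  obtain rfl : k = k' := TypeCat.homEquiv.symm.injective keys_eq
  rfl

theorem models_instances_map (m : A ⟶ B) (y : A.E.Y) (x : B.E.X) :
    B.E.models (instances.map m y) x ↔ A.E.models y (types.map m.op x) :=
  (TableHom.fg m).adj y x

theorem types_map_signature (m : A ⟶ B) (i : B.I) :
    types.map m.op (B.s i) = A.s (indices.map m.op i) :=
  TableHom.comm m i

theorem tuple_keys_map (m : A ⟶ B) (a : A.K) (i : B.I) :
    (B.t (keys.map m a)).1 i = instances.map m ((A.t a).1 (indices.map m.op i)) :=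
  TableHom.cond m a i

end Hom

/-- The signatures `s : I → X` of all tables, as a natural transformation. -/
def signature : indices ⟶ types where
  app T := ↾T.unop.s
  naturality _ _ m := by
    ext i
    exact (types_map_signature m.unop i).symm

variable {J : Type v} [Category.{w} J] {F : J ⥤ Table}

section Desc

variable {c : Cocone F} (hX : IsLimit (types.mapCone c.op))
  (hY : IsColimit (instances.mapCocone c)) (hI : IsLimit (indices.mapCone c.op))
  (hK : IsColimit (keys.mapCocone c)) (d : Cocone F)

theorem types_map_lift (j : J) (x : d.pt.E.X) :
    types.map (c.ι.app j).op (hX.lift (types.mapCone d.op) x) = types.map (d.ι.app j).op x :=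
  ConcreteCategory.congr_hom (hX.fac (types.mapCone d.op) (op j)) x

theorem desc_instances_map (j : J) (y : (F.obj j).E.Y) :
    hY.desc (instances.mapCocone d) (instances.map (c.ι.app j) y) =
      instances.map (d.ι.app j) y :=
  ConcreteCategory.congr_hom (hY.fac (instances.mapCocone d) j) y

theorem indices_map_lift (j : J) (i : d.pt.I) :
    indices.map (c.ι.app j).op (hI.lift (indices.mapCone d.op) i) =
      indices.map (d.ι.app j).op i :=
  ConcreteCategory.congr_hom (hI.fac (indices.mapCone d.op) (op j)) i

theorem desc_keys_map (j : J) (a : (F.obj j).K) :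
    hK.desc (keys.mapCocone d) (keys.map (c.ι.app j) a) = keys.map (d.ι.app j) a :=
  ConcreteCategory.congr_hom (hK.fac (keys.mapCocone d) j) a

theorem models_desc_iff_models_lift (y : c.pt.E.Y) (x : d.pt.E.X) :
    d.pt.E.models (hY.desc (instances.mapCocone d) y) x ↔
      c.pt.E.models y (hX.lift (types.mapCone d.op) x) := by
  obtain ⟨j, y, rfl⟩ := Types.jointly_surjective_of_isColimit hY y
  calc
    _ ↔ d.pt.E.models (instances.map (d.ι.app j) y) x :=
      iff_of_eq (congrArg (d.pt.E.models · x) (desc_instances_map hY d j y))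
    _ ↔ (F.obj j).E.models y (types.map (d.ι.app j).op x) := models_instances_map _ y x
    _ ↔ (F.obj j).E.models y
          (types.map (c.ι.app j).op (hX.lift (types.mapCone d.op) x)) := by
      rw [types_map_lift hX d j x]
    _ ↔ _ := (models_instances_map (c.ι.app j) y _).symm

theorem lift_signature (i : d.pt.I) :
    hX.lift (types.mapCone d.op) (d.pt.s i) = c.pt.s (hI.lift (indices.mapCone d.op) i) := by
  refine Concrete.isLimit_ext _ hX _ _ fun j => ?_
  calc
    _ = types.map (d.ι.app j.unop).op (d.pt.s i) := types_map_lift hX d j.unop _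
    _ = (F.obj j.unop).s (indices.map (d.ι.app j.unop).op i) := types_map_signature _ i
    _ = (F.obj j.unop).s
          (indices.map (c.ι.app j.unop).op (hI.lift (indices.mapCone d.op) i)) := by
      rw [indices_map_lift hI d j.unop i]
    _ = _ := (types_map_signature (c.ι.app j.unop) _).symm

theorem tuple_desc (a : c.pt.K) (i : d.pt.I) :
    (d.pt.t (hK.desc (keys.mapCocone d) a)).1 i =
      hY.desc (instances.mapCocone d) ((c.pt.t a).1 (hI.lift (indices.mapCone d.op) i)) := by
  obtain ⟨j, a, rfl⟩ := Types.jointly_surjective_of_isColimit hK a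
  calc
    _ = (d.pt.t (keys.map (d.ι.app j) a)).1 i :=
      congrArg (fun b => (d.pt.t b).1 i) (desc_keys_map hK d j a)
    _ = instances.map (d.ι.app j) (((F.obj j).t a).1 (indices.map (d.ι.app j).op i)) :=
      tuple_keys_map _ a i
    _ = instances.map (d.ι.app j) (((F.obj j).t a).1
          (indices.map (c.ι.app j).op (hI.lift (indices.mapCone d.op) i))) := by
      rw [indices_map_lift hI d j i]
    _ = hY.desc (instances.mapCocone d) (instances.map (c.ι.app j) (((F.obj j).t a).1
          (indices.map (c.ι.app j).op (hI.lift (indices.mapCone d.op) i)))) :=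
      (desc_instances_map hY d j _).symm
    _ = _ := congrArg _ (tuple_keys_map (c.ι.app j) a _).symm

/-- The four component functors jointly reflect colimits of tables: contravariant components have
to form limit cones, covariant ones colimit cocones. -/
def isColimitOfComponents : IsColimit c where
  desc d :=
    { fg :=
        { f := hX.lift (types.mapCone d.op)
          g := hY.desc (instances.mapCocone d)
          adj := models_desc_iff_models_lift hX hY d }
      h := hI.lift (indices.mapCone d.op)
      comm := lift_signature hX hI d
      k := hK.desc (keys.mapCocone d)
      cond := tuple_desc hY hI hK d }
  fac d j := hom_ext (hX.fac (types.mapCone d.op) (op j)) (hY.fac (instances.mapCocone d) j)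
    (hI.fac (indices.mapCone d.op) (op j)) (hK.fac (keys.mapCocone d) j)
  uniq d m hm := hom_ext
    (hX.uniq (types.mapCone d.op) (types.map m.op) fun j =>
      congrArg (fun n : F.obj j.unop ⟶ d.pt => types.map n.op) (hm j.unop))
    (hY.uniq (instances.mapCocone d) (instances.map m) fun j => congrArg instances.map (hm j))
    (hI.uniq (indices.mapCone d.op) (indices.map m.op) fun j =>
      congrArg (fun n : F.obj j.unop ⟶ d.pt => indices.map n.op) (hm j.unop))
    (hK.uniq (keys.mapCocone d) (keys.map m) fun j => congrArg keys.map (hm j))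

end Desc

section Construction

variable (F) [HasLimitsOfShape Jᵒᵖ Type]

theorem types_map_limit_π {j j' : J} (m : j ⟶ j') (x : limit (F.op ⋙ types)) :
    types.map (F.map m).op (limit.π (F.op ⋙ types) (op j') x) =
      limit.π (F.op ⋙ types) (op j) x :=
  limit.w_apply (F.op ⋙ types) m.op x

theorem indices_map_limit_π {j j' : J} (m : j ⟶ j') (i : limit (F.op ⋙ indices)) :
    indices.map (F.map m).op (limit.π (F.op ⋙ indices) (op j') i) =
      limit.π (F.op ⋙ indices) (op j) i :=
  limit.w_apply (F.op ⋙ indices) m.op i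

/-- The signature of the colimit table, sending a compatible family of indices to the family of
their types. -/
noncomputable def colimitSignature : limit (F.op ⋙ indices) ⟶ limit (F.op ⋙ types) :=
  limMap (F.op.whiskerLeft signature)

theorem limit_π_colimitSignature (j : J) (i : limit (F.op ⋙ indices)) :
    limit.π (F.op ⋙ types) (op j) (colimitSignature F i) =
      (F.obj j).s (limit.π (F.op ⋙ indices) (op j) i) :=
  limMap_π_apply (F.op.whiskerLeft signature) (op j) i

/-- Satisfaction in the tables `F.obj j`, as a cocone on their instances: an instance is sent to
the predicate it induces on compatible families of types. -/
noncomputable def modelsCocone : Cocone (F ⋙ instances) where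
  pt := limit (F.op ⋙ types) → Prop
  ι :=
    { app j := ↾fun y x => (F.obj j).E.models y (limit.π (F.op ⋙ types) (op j) x)
      naturality j j' m := by
        ext y
        funext x
        refine (propext (models_instances_map (F.map m) y _)).trans ?_
        exact congrArg ((F.obj j).E.models y) (types_map_limit_π F m x) }

variable [HasColimitsOfShape J Type]

/-- The colimit classification of compatible families of types and glued instances. -/
noncomputable def colimitClassification : Classification where
  X := limit (F.op ⋙ types)
  Y := colimit (F ⋙ instances)
  models := colimit.desc (F ⋙ instances) (modelsCocone F)

theorem models_colimit_ι (j : J) (y : (F.obj j).E.Y) (x : limit (F.op ⋙ types)) :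
    (colimitClassification F).models (colimit.ι (F ⋙ instances) j y) x ↔
      (F.obj j).E.models y (limit.π (F.op ⋙ types) (op j) x) :=
  iff_of_eq (congrFun (colimit.ι_desc_apply (modelsCocone F) j y) x)

/-- The tuples of the tables `F.obj j`, as a cocone on their keys with values in the tuple set of
the colimit signature. -/
noncomputable def tupleCocone : Cocone (F ⋙ keys) where
  pt := { u : limit (F.op ⋙ indices) → colimit (F ⋙ instances) //
    ∀ i, (colimitClassification F).models (u i) (colimitSignature F i) }
  ι :=
    { app j := ↾fun a =>
        ⟨fun i => colimit.ι (F ⋙ instances) j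
            (((F.obj j).t a).1 (limit.π (F.op ⋙ indices) (op j) i)), fun i => by
          rw [models_colimit_ι, limit_π_colimitSignature]
          exact ((F.obj j).t a).2 _⟩
      naturality j j' m := by
        ext a
        refine Subtype.ext (funext fun i => ?_)
        calc
          _ = colimit.ι (F ⋙ instances) j' (instances.map (F.map m) (((F.obj j).t a).1
                (indices.map (F.map m).op (limit.π (F.op ⋙ indices) (op j') i)))) :=
            congrArg _ (tuple_keys_map (F.map m) a _)
          _ = colimit.ι (F ⋙ instances) j (((F.obj j).t a).1
                (indices.map (F.map m).op (limit.π (F.op ⋙ indices) (op j') i))) :=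
            colimit.w_apply (F ⋙ instances) m _
          _ = colimit.ι (F ⋙ instances) j (((F.obj j).t a).1
                (limit.π (F.op ⋙ indices) (op j) i)) := by
            rw [indices_map_limit_π] }

/-- The componentwise colimit of tables. -/
noncomputable def colimitTable : Table where
  E := colimitClassification F
  I := limit (F.op ⋙ indices)
  s := colimitSignature F
  K := colimit (F ⋙ keys)
  t := colimit.desc (F ⋙ keys) (tupleCocone F)

theorem tuple_colimit_ι (j : J) (a : (F.obj j).K) (i : limit (F.op ⋙ indices)) :
    ((colimitTable F).t (colimit.ι (F ⋙ keys) j a)).1 i =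
      colimit.ι (F ⋙ instances) j
        (((F.obj j).t a).1 (limit.π (F.op ⋙ indices) (op j) i)) :=
  congrArg (fun u : (tupleCocone F).pt => u.1 i) (colimit.ι_desc_apply (tupleCocone F) j a)

/-- The cocone of componentwise projections and injections on `colimitTable F`. -/
noncomputable def colimitCocone : Cocone F where
  pt := colimitTable F
  ι :=
    { app j :=
        { fg :=
            { f := limit.π (F.op ⋙ types) (op j)
              g := colimit.ι (F ⋙ instances) j
              adj := models_colimit_ι F j }
          h := limit.π (F.op ⋙ indices) (op j)
          comm := limit_π_colimitSignature F j
          k := colimit.ι (F ⋙ keys) j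
          cond := tuple_colimit_ι F j }
      naturality _ _ m := hom_ext (limit.w (F.op ⋙ types) m.op)
        (colimit.w (F ⋙ instances) m) (limit.w (F.op ⋙ indices) m.op)
        (colimit.w (F ⋙ keys) m) }

instance hasColimitsOfShape : HasColimitsOfShape J Table where
  has_colimit F := ⟨⟨colimitCocone F, isColimitOfComponents
    (limit.isLimit (F.op ⋙ types)) (colimit.isColimit (F ⋙ instances))
    (limit.isLimit (F.op ⋙ indices)) (colimit.isColimit (F ⋙ keys))⟩⟩

end Construction

end Table

theorem tbl_hasColimits_general : HasColimitsOfSize.{w, 0} Table where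

/-- the category `Tbl` of tables is cocomplete: it has all small colimits. -/
theorem tbl_hasColimits : HasColimits Table :=
  tbl_hasColimits_general
end
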